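/- Let n ≥ 1 and s ∈ (0,1). Define u : ℝⁿ → ℝ by u(x) = c(n,s)·(1−|x|²)^{s−1} for |x| < 1 and u(x) = 0 for |x| ≥ 1. Then u satisfies the s-mean value property on the open unit ball B: for every x ∈ B and every 0 < r < 1−|x|, u(x) = ∫_{ℝⁿ∖B_r(x)} η_r^{(s)}(y−x)·u(y) dy, with the integral absolutely convergent. -/

import Mathlib

open MeasureTheory Real Set

/-- The normalizing constant `c(n,s) = Γ(n/2)·sin(πs)/π^{1+n/2}`. -/
noncomputable def cns (n : ℕ) (s : ℝ) : ℝ :=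
  Real.Gamma ((n : ℝ) / 2) * Real.sin (Real.pi * s) / Real.pi ^ ((1 : ℝ) + (n : ℝ) / 2)

/-- The kernel `η_r^{(s)}(y) = c(n,s)·r^{2s}/(|y|^n·(|y|²−r²)^s)` for `|y| > r`, `0` otherwise. -/
noncomputable def eta (n : ℕ) (s r : ℝ) (y : EuclideanSpace ℝ (Fin n)) : ℝ :=
  if r < ‖y‖ then cns n s * r ^ (2 * s) / (‖y‖ ^ n * (‖y‖ ^ 2 - r ^ 2) ^ s) else 0

/-- The function `u(x) = c(n,s)·(1−|x|²)^{s−1}` for `|x| < 1`, `0` for `|x| ≥ 1`. -/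
noncomputable def uOneMinusS (n : ℕ) (s : ℝ) (x : EuclideanSpace ℝ (Fin n)) : ℝ :=
  if ‖x‖ < 1 then cns n s * (1 - ‖x‖ ^ 2) ^ (s - 1) else 0

/-!
In polar coordinates about `x`, the substitution `w = (1 - |x + ρω|²) / (ρ² - r²)` maps the part of
the ray in direction `ω` that lies between `B_r(x)` and the unit sphere onto `(0, ∞)`. Its inverse
is the positive root `ρ` of a quadratic equation; passing from `ω` to `-ω` replaces `ρ` by the
absolute value of the other root. Hence, when the contributions of two opposite rays are added, the
square roots cancel and what remains is a beta integral with value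
`(1 - |x|²) ^ (s - 1) * π / sin (π * s)`, whatever `ω` and `r` are. The pairs `±ω` are
parametrised by half of the sphere, whose area is `2 * π ^ (n / 2) / Γ(n / 2)`, and `c(n,s)` is the
constant that normalises the result.
-/

open ProbabilityTheory (beta beta_pos) in
lemma lintegral_rpow_mul_one_sub_rpow {α β : ℝ} (hα : 0 < α) (hβ : 0 < β) :
    ∫⁻ v in Ioo (0 : ℝ) 1, ENNReal.ofReal (v ^ (α - 1) * (1 - v) ^ (β - 1)) =
      ENNReal.ofReal (beta α β) := by
  have hB := beta_pos hα hβ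
  have hpdf : ENNReal.ofReal (beta α β)⁻¹ *
      ∫⁻ v in Ioo (0 : ℝ) 1, ENNReal.ofReal (v ^ (α - 1) * (1 - v) ^ (β - 1)) = 1 := by
    rw [← ProbabilityTheory.lintegral_betaPDF_eq_one hα hβ, ProbabilityTheory.lintegral_betaPDF,
      ← lintegral_const_mul' _ _ ENNReal.ofReal_ne_top]
    simp only [← ENNReal.ofReal_mul (inv_nonneg.2 hB.le), one_div, mul_assoc]
  rw [← mul_one (ENNReal.ofReal _), ← hpdf, ← mul_assoc, ← ENNReal.ofReal_mul hB.le,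
    mul_inv_cancel₀ hB.ne', ENNReal.ofReal_one, one_mul]

lemma bijOn_mul_div_one_sub {c : ℝ} (hc : 0 < c) :
    BijOn (fun v : ℝ ↦ c * v / (1 - v)) (Ioo 0 1) (Ioi 0) := by
  refine InvOn.bijOn (f' := fun w ↦ w / (c + w)) ⟨fun v hv ↦ ?_, fun w hw ↦ ?_⟩
    (fun v hv ↦ div_pos (mul_pos hc hv.1) (sub_pos.2 hv.2)) fun w hw ↦ ?_
  · have : 1 - v ≠ 0 := (sub_pos.2 hv.2).ne'
    simp only
    field_simp
    ring
  · have : c + w ≠ 0 := (add_pos hc hw).ne'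
    simp only
    field_simp [hc.ne']
    ring
  · have hcw : 0 < c + w := add_pos hc hw
    exact ⟨div_pos hw hcw, (div_lt_one hcw).2 (by linarith)⟩

lemma hasDerivAt_mul_div_one_sub (c : ℝ) {v : ℝ} (hv : v < 1) :
    HasDerivAt (fun v : ℝ ↦ c * v / (1 - v)) (c / (1 - v) ^ 2) v := by
  refine (((hasDerivAt_id v).const_mul c).div ((hasDerivAt_id v).const_sub 1)
    (sub_pos.2 hv).ne').congr_deriv ?_
  simp only [id]
  ring

open ProbabilityTheory (beta beta_pos) in
lemma lintegral_rpow_div_add_mul_rpow {α β a b : ℝ} (hα : 0 < α) (hβ : 0 < β) (ha : 0 < a)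
    (hb : 0 < b) :
    ∫⁻ w in Ioi (0 : ℝ), ENNReal.ofReal (w ^ (α - 1) / (a + b * w) ^ (α + β)) =
      ENNReal.ofReal (beta α β / (a ^ β * b ^ α)) := by
  have hbij := bijOn_mul_div_one_sub (div_pos ha hb)
  rw [← hbij.image_eq, lintegral_image_eq_lintegral_abs_deriv_mul measurableSet_Ioo
    (fun v hv ↦ (hasDerivAt_mul_div_one_sub _ hv.2).hasDerivWithinAt) hbij.injOn,
    div_eq_inv_mul (beta α β), ENNReal.ofReal_mul (by positivity),
    ← lintegral_rpow_mul_one_sub_rpow hα hβ, ← lintegral_const_mul' _ _ ENNReal.ofReal_ne_top]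
  refine setLIntegral_congr_fun measurableSet_Ioo fun v ⟨hv0, hv1⟩ ↦ ?_
  have hv : 0 < 1 - v := sub_pos.2 hv1
  have hden : a + b * (a / b * v / (1 - v)) = a / (1 - v) := by field_simp; ring
  rw [← ENNReal.ofReal_mul (abs_nonneg _), ← ENNReal.ofReal_mul (by positivity),
    abs_of_pos (by positivity), hden, div_rpow (by positivity) hv.le, div_rpow ha.le hv.le,
    mul_rpow (by positivity) hv0.le, div_rpow ha.le hb.le, rpow_add ha, rpow_add hv,
    rpow_sub_one hv.ne', rpow_sub_one hv.ne', rpow_sub_one ha.ne', rpow_sub_one hb.ne']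
  congr 1
  field_simp

lemma beta_one_sub (s : ℝ) : ProbabilityTheory.beta s (1 - s) = π / sin (π * s) := by
  simp [ProbabilityTheory.beta, Gamma_mul_Gamma_one_sub]

section Polar

variable {E : Type*} [NormedAddCommGroup E] [NormedSpace ℝ E] [FiniteDimensional ℝ E]
  [Nontrivial E] [MeasurableSpace E] [BorelSpace E] (μ : Measure E) [μ.IsAddHaarMeasure]
  {f : E → ENNReal}

open Module (finrank)

lemma lintegral_eq_lintegral_toSphere (hf : Measurable f) :
    ∫⁻ z, f z ∂μ = ∫⁻ ω : Metric.sphere (0 : E) 1,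
      ∫⁻ ρ in Ioi (0 : ℝ), ENNReal.ofReal (ρ ^ (finrank ℝ E - 1)) * f (ρ • (ω : E))
        ∂volume ∂μ.toSphere := by
  have hray (ω : Metric.sphere (0 : E) 1) :
      ∫⁻ ρ, f ((ρ : ℝ) • (ω : E)) ∂(Measure.volumeIoiPow (finrank ℝ E - 1)) =
        ∫⁻ ρ in Ioi (0 : ℝ), ENNReal.ofReal (ρ ^ (finrank ℝ E - 1)) * f (ρ • (ω : E)) := by
    have hfω : Measurable fun ρ : Ioi (0 : ℝ) ↦ f ((ρ : ℝ) • (ω : E)) := hf.comp (by fun_prop)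
    rw [Measure.volumeIoiPow, lintegral_withDensity_eq_lintegral_mul _ (by fun_prop) hfω,
      ← lintegral_subtype_comap measurableSet_Ioi]
    rfl
  have hg : Measurable fun q : Metric.sphere (0 : E) 1 × Ioi (0 : ℝ) ↦ f ((q.2 : ℝ) • (q.1 : E)) :=
    hf.comp (by fun_prop)
  calc ∫⁻ z, f z ∂μ = ∫⁻ z : ({0}ᶜ : Set E), f z ∂(μ.comap (↑)) := by
        rw [lintegral_subtype_comap (measurableSet_singleton _).compl, restrict_compl_singleton]
    _ = ∫⁻ z : ({0}ᶜ : Set E), f (((homeomorphUnitSphereProd E z).2 : ℝ) •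
          ((homeomorphUnitSphereProd E z).1 : E)) ∂(μ.comap (↑)) := by
        refine lintegral_congr fun z ↦ ?_
        have hz : ‖(z : E)‖ ≠ 0 := norm_ne_zero_iff.2 z.2
        simp [smul_smul, hz]
    _ = ∫⁻ q, f ((q.2 : ℝ) • (q.1 : E))
          ∂(μ.toSphere.prod (Measure.volumeIoiPow (finrank ℝ E - 1))) :=
        μ.measurePreserving_homeomorphUnitSphereProd.lintegral_comp hg
    _ = _ := by
        rw [lintegral_prod _ hg.aemeasurable]
        exact lintegral_congr hray

lemma two_mul_lintegral_of_forall_ray_add_opposite_ray (hf : Measurable f) {C : ENNReal}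
    (hC : ∀ ω : E, ‖ω‖ = 1 →
      (∫⁻ ρ in Ioi (0 : ℝ), ENNReal.ofReal (ρ ^ (finrank ℝ E - 1)) * f (ρ • ω)) +
        ∫⁻ ρ in Ioi (0 : ℝ), ENNReal.ofReal (ρ ^ (finrank ℝ E - 1)) * f (ρ • -ω) = C) :
    2 * ∫⁻ z, f z ∂μ = C * μ.toSphere univ := by
  have hneg : Measurable fun z ↦ f (-z) := hf.comp measurable_neg
  have hray (ω : Metric.sphere (0 : E) 1) :
      ∫⁻ ρ in Ioi (0 : ℝ), ENNReal.ofReal (ρ ^ (finrank ℝ E - 1)) *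
        (f (ρ • (ω : E)) + f (-(ρ • (ω : E)))) = C := by
    have hmeas : Measurable fun ρ : ℝ ↦
        ENNReal.ofReal (ρ ^ (finrank ℝ E - 1)) * f (ρ • (ω : E)) :=
      Measurable.mul (by fun_prop) (hf.comp (by fun_prop))
    rw [← hC ω (by simp), ← lintegral_add_left hmeas]
    simp only [mul_add, smul_neg]
  calc 2 * ∫⁻ z, f z ∂μ = ∫⁻ z, f z + f (-z) ∂μ := by
        rw [lintegral_add_left hf, lintegral_neg_eq_self f, two_mul]
    _ = C * μ.toSphere univ := by
        rw [lintegral_eq_lintegral_toSphere μ (hf.fun_add hneg), lintegral_congr hray,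
          lintegral_const]

end Polar

lemma toSphere_univ {E : Type*} [NormedAddCommGroup E] [InnerProductSpace ℝ E]
    [FiniteDimensional ℝ E] [Nontrivial E] [MeasurableSpace E] [BorelSpace E] :
    (volume : Measure E).toSphere univ = ENNReal.ofReal
      (2 * π ^ (Module.finrank ℝ E / 2 : ℝ) / Gamma (Module.finrank ℝ E / 2)) := by
  have hd : (0 : ℝ) < Module.finrank ℝ E := Nat.cast_pos.2 Module.finrank_pos
  have hsqrt : √π ^ Module.finrank ℝ E = π ^ (Module.finrank ℝ E / 2 : ℝ) := by
    rw [sqrt_eq_rpow, ← rpow_mul_natCast pi_pos.le]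
    congr 1
    ring
  rw [Measure.toSphere_apply_univ, InnerProductSpace.volume_ball, ENNReal.ofReal_one, one_pow,
    one_mul, ← ENNReal.ofReal_natCast, ← ENNReal.ofReal_mul hd.le, hsqrt,
    Gamma_add_one (by positivity)]
  congr 1
  field_simp

section Ray

/-- The value `1 - ‖x + ρ • ω‖²` along the ray from `x` in the unit direction `ω`, in terms of
`P = 1 - ‖x‖²` and `p = ⟪x, ω⟫`; see `one_sub_norm_add_smul_sq`. -/
def rayGap (P p ρ : ℝ) : ℝ := P - 2 * p * ρ - ρ ^ 2

/-- The parameters `ρ` of the part of a ray that lies in the unit ball but outside the ball of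
radius `r` about the starting point. -/
def rayDomain (r P p : ℝ) : Set ℝ := {ρ | r < ρ ∧ 0 < rayGap P p ρ}

/-- The product of `η_r^{(s)}`, `u` and the polar density `ρ ^ (n - 1)` along a ray, without the
factor `c(n,s)²`. -/
noncomputable def rayIntegrand (s r P p ρ : ℝ) : ℝ :=
  r ^ (2 * s) / (ρ * (ρ ^ 2 - r ^ 2) ^ s) * rayGap P p ρ ^ (s - 1)

/-- The new variable `w` that turns the integral along a ray into one over `(0, ∞)`. -/
noncomputable def rayRatio (r P p ρ : ℝ) : ℝ := rayGap P p ρ / (ρ ^ 2 - r ^ 2)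

/-- The square root of the reduced discriminant of the equation
`(1 + w) * ρ ^ 2 + 2 * p * ρ = P + r ^ 2 * w`, which expresses `w = rayRatio r P p ρ`. -/
noncomputable def sqrtDisc (r P p w : ℝ) : ℝ := √(p ^ 2 + (1 + w) * (P + r ^ 2 * w))

/-- The inverse of `rayRatio` on `rayDomain`: the positive root of the equation in `sqrtDisc`. -/
noncomputable def rayRoot (r P p w : ℝ) : ℝ := (sqrtDisc r P p w - p) / (1 + w)

variable {s r P p ρ w : ℝ}

lemma measurableSet_rayDomain : MeasurableSet (rayDomain r P p) := by
  have hgap : Continuous (rayGap P p) := by unfold rayGap; fun_prop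
  exact measurableSet_Ioi.inter (isOpen_lt continuous_const hgap).measurableSet

lemma pos_of_mem_rayDomain (hr : 0 ≤ r) (hρ : ρ ∈ rayDomain r P p) : 0 < ρ :=
  hr.trans_lt hρ.1

lemma sq_sub_sq_pos_of_mem_rayDomain (hr : 0 ≤ r) (hρ : ρ ∈ rayDomain r P p) :
    0 < ρ ^ 2 - r ^ 2 :=
  sub_pos.2 (pow_lt_pow_left₀ hρ.1 hr two_ne_zero)

lemma rayRatio_pos (hr : 0 ≤ r) (hρ : ρ ∈ rayDomain r P p) : 0 < rayRatio r P p ρ :=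
  div_pos hρ.2 (sq_sub_sq_pos_of_mem_rayDomain hr hρ)

lemma rayRatio_eq_iff (h : r ^ 2 < ρ ^ 2) :
    rayRatio r P p ρ = w ↔ (1 + w) * ρ ^ 2 + 2 * p * ρ = P + r ^ 2 * w := by
  rw [rayRatio, rayGap, div_eq_iff (sub_pos.2 h).ne']
  constructor <;> intro h <;> linear_combination -h

lemma sqrtDisc_neg : sqrtDisc r P (-p) w = sqrtDisc r P p w := by
  simp only [sqrtDisc, neg_sq]

lemma sqrtDisc_sq (hP : 0 ≤ P) (hw : 0 ≤ w) :
    sqrtDisc r P p w ^ 2 = p ^ 2 + (1 + w) * (P + r ^ 2 * w) :=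
  sq_sqrt (by positivity)

lemma abs_lt_sqrtDisc (hP : 0 < P) (hw : 0 ≤ w) : |p| < sqrtDisc r P p w := by
  rw [sqrtDisc, lt_sqrt (abs_nonneg p), sq_abs, lt_add_iff_pos_right]
  positivity

lemma sqrtDisc_pos (hP : 0 < P) (hw : 0 ≤ w) : 0 < sqrtDisc r P p w :=
  (abs_nonneg p).trans_lt (abs_lt_sqrtDisc hP hw)

lemma rayRoot_pos (hP : 0 < P) (hw : 0 ≤ w) : 0 < rayRoot r P p w :=
  div_pos (sub_pos.2 ((le_abs_self p).trans_lt (abs_lt_sqrtDisc hP hw))) (by positivity)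

lemma rayRoot_isRoot (hP : 0 ≤ P) (hw : 0 ≤ w) :
    (1 + w) * rayRoot r P p w ^ 2 + 2 * p * rayRoot r P p w = P + r ^ 2 * w := by
  have hw' : 1 + w ≠ 0 := by positivity
  rw [rayRoot]
  field_simp
  linear_combination sqrtDisc_sq (r := r) (p := p) hP hw

lemma root_add_neg_root_pos (hP : 0 < P) (hw : 0 ≤ w) (hρ : 0 < ρ)
    (hroot : (1 + w) * ρ ^ 2 + 2 * p * ρ = P + r ^ 2 * w) : 0 < (1 + w) * ρ + 2 * p := by
  refine pos_of_mul_pos_left (b := ρ) ?_ hρ.le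
  calc 0 < P + r ^ 2 * w := by positivity
    _ = ((1 + w) * ρ + 2 * p) * ρ := by linear_combination -hroot

lemma lt_rayRoot (hP : 0 < P) (h : r ^ 2 + 2 * p * r < P) (hw : 0 ≤ w) :
    r < rayRoot r P p w := by
  have hpos := rayRoot_pos (r := r) (p := p) hP hw
  have hroot := rayRoot_isRoot (r := r) (p := p) hP.le hw
  set ρ := rayRoot r P p w
  by_contra! hle
  have hslope := root_add_neg_root_pos hP hw hpos hroot
  have : 0 ≤ (r - ρ) * ((1 + w) * ρ + 2 * p + (1 + w) * r) := by
    have := sub_nonneg.2 hle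
    have := hpos.le.trans hle
    positivity
  linarith

lemma rayRoot_mem_rayDomain (hr : 0 ≤ r) (hP : 0 < P) (h : r ^ 2 + 2 * p * r < P) (hw : 0 < w) :
    rayRoot r P p w ∈ rayDomain r P p := by
  have hlt := lt_rayRoot hP h hw.le
  refine ⟨hlt, ?_⟩
  calc 0 < w * (rayRoot r P p w ^ 2 - r ^ 2) :=
        mul_pos hw (sub_pos.2 (pow_lt_pow_left₀ hlt hr two_ne_zero))
    _ = rayGap P p (rayRoot r P p w) := by
        rw [rayGap]
        linear_combination rayRoot_isRoot (r := r) (p := p) hP.le hw.le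

lemma sqrtDisc_rayRatio (hr : 0 ≤ r) (hP : 0 < P) (hρ : ρ ∈ rayDomain r P p) :
    sqrtDisc r P p (rayRatio r P p ρ) = (1 + rayRatio r P p ρ) * ρ + p := by
  have hρ0 := pos_of_mem_rayDomain hr hρ
  have hw := rayRatio_pos hr hρ
  have hroot := (rayRatio_eq_iff (sub_pos.1 (sq_sub_sq_pos_of_mem_rayDomain hr hρ))).1
    (rfl : rayRatio r P p ρ = _)
  set w := rayRatio r P p ρ
  have hslope := root_add_neg_root_pos hP hw.le hρ0 hroot
  have hpos : 0 ≤ (1 + w) * ρ + p := by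
    have : 0 < (1 + w) * ρ := by positivity
    linarith
  rw [sqrtDisc, ← hroot, ← sqrt_sq hpos]
  congr 1
  ring

lemma leftInvOn_rayRoot_rayRatio (hr : 0 ≤ r) (hP : 0 < P) :
    LeftInvOn (rayRoot r P p) (rayRatio r P p) (rayDomain r P p) := by
  intro ρ hρ
  have := rayRatio_pos hr hρ
  rw [rayRoot, sqrtDisc_rayRatio hr hP hρ]
  field_simp
  ring

lemma bijOn_rayRatio (hr : 0 ≤ r) (hP : 0 < P) (h : r ^ 2 + 2 * p * r < P) :
    BijOn (rayRatio r P p) (rayDomain r P p) (Ioi 0) := by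
  refine InvOn.bijOn ⟨leftInvOn_rayRoot_rayRatio hr hP, fun w (hw : 0 < w) ↦ ?_⟩
    (fun ρ hρ ↦ rayRatio_pos hr hρ) fun w hw ↦ rayRoot_mem_rayDomain hr hP h hw
  rw [rayRatio_eq_iff (pow_lt_pow_left₀ (lt_rayRoot hP h hw.le) hr two_ne_zero)]
  exact rayRoot_isRoot hP.le hw.le

lemma hasDerivAt_rayRatio (h : ρ ^ 2 - r ^ 2 ≠ 0) :
    HasDerivAt (rayRatio r P p)
      (-(2 * ((1 + rayRatio r P p ρ) * ρ + p) / (ρ ^ 2 - r ^ 2))) ρ := by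
  have hgap : HasDerivAt (rayGap P p) (-(2 * p) - 2 * ρ) ρ := by
    refine ((((hasDerivAt_id ρ).const_mul (2 * p)).const_sub P).sub
      (hasDerivAt_pow 2 ρ)).congr_deriv ?_
    simp
  have hden : HasDerivAt (fun ρ : ℝ ↦ ρ ^ 2 - r ^ 2) (2 * ρ) ρ := by
    simpa using (hasDerivAt_pow 2 ρ).sub_const (r ^ 2)
  refine (hgap.div hden h).congr_deriv ?_
  rw [rayRatio]
  field_simp
  ring

lemma rayIntegrand_eq_rayRatio (hr : 0 ≤ r) (hρ : ρ ∈ rayDomain r P p) :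
    rayIntegrand s r P p ρ =
      r ^ (2 * s) * rayRatio r P p ρ ^ (s - 1) / (ρ * (ρ ^ 2 - r ^ 2)) := by
  have hd := sq_sub_sq_pos_of_mem_rayDomain hr hρ
  have hρ0 := pos_of_mem_rayDomain hr hρ
  have hgap : rayGap P p ρ = rayRatio r P p ρ * (ρ ^ 2 - r ^ 2) :=
    (div_mul_cancel₀ _ hd.ne').symm
  rw [rayIntegrand, hgap, mul_rpow (rayRatio_pos hr hρ).le hd.le, rpow_sub_one hd.ne']
  field_simp

lemma setLIntegral_rayIntegrand (hr : 0 ≤ r) (hP : 0 < P) (h : r ^ 2 + 2 * p * r < P) :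
    ∫⁻ ρ in rayDomain r P p, ENNReal.ofReal (rayIntegrand s r P p ρ) =
      ∫⁻ w in Ioi 0, ENNReal.ofReal
        (r ^ (2 * s) * w ^ (s - 1) / (2 * sqrtDisc r P p w * rayRoot r P p w)) := by
  have hbij := bijOn_rayRatio hr hP h
  have hden (ρ) (hρ : ρ ∈ rayDomain r P p) := sq_sub_sq_pos_of_mem_rayDomain hr hρ
  rw [← hbij.image_eq, lintegral_image_eq_lintegral_abs_deriv_mul measurableSet_rayDomain
    (fun ρ hρ ↦ (hasDerivAt_rayRatio (hden ρ hρ).ne').hasDerivWithinAt) hbij.injOn]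
  refine setLIntegral_congr_fun measurableSet_rayDomain fun ρ hρ ↦ ?_
  have hd := hden ρ hρ
  have hρ0 := pos_of_mem_rayDomain hr hρ
  have hS := sqrtDisc_pos (r := r) (p := p) hP (rayRatio_pos hr hρ).le
  rw [← ENNReal.ofReal_mul (abs_nonneg _), leftInvOn_rayRoot_rayRatio hr hP hρ,
    ← sqrtDisc_rayRatio hr hP hρ, abs_neg, abs_of_pos (by positivity),
    rayIntegrand_eq_rayRatio hr hρ]
  congr 1
  field_simp

-- The two roots of the quadratic equation have opposite signs and `rayRoot r P (-p) w` is the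
-- absolute value of the negative one, so the square roots cancel by Vieta's formulas.
lemma inv_rayRoot_add_inv_rayRoot_neg (hP : 0 < P) (hw : 0 ≤ w) :
    1 / (2 * sqrtDisc r P p w * rayRoot r P p w) +
      1 / (2 * sqrtDisc r P (-p) w * rayRoot r P (-p) w) = 1 / (P + r ^ 2 * w) := by
  have hS := sqrtDisc_pos (r := r) (p := p) hP hw
  obtain ⟨hneg, hpos⟩ := abs_lt.1 (abs_lt_sqrtDisc (r := r) (p := p) hP hw)
  have hsub : sqrtDisc r P p w - p ≠ 0 := by linarith
  have hadd : sqrtDisc r P p w + p ≠ 0 := by linarith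
  rw [rayRoot, rayRoot, sqrtDisc_neg, sub_neg_eq_add]
  field_simp
  linear_combination -2 * sqrtDisc r P p w * sqrtDisc_sq (r := r) (p := p) hP.le hw

lemma setLIntegral_rayIntegrand_add_neg (hs : s ∈ Ioo 0 1) (hr : 0 < r)
    (h : r ^ 2 + 2 * p * r < P) (h' : r ^ 2 + 2 * (-p) * r < P) :
    (∫⁻ ρ in rayDomain r P p, ENNReal.ofReal (rayIntegrand s r P p ρ)) +
      ∫⁻ ρ in rayDomain r P (-p), ENNReal.ofReal (rayIntegrand s r P (-p) ρ) =
    ENNReal.ofReal (P ^ (s - 1) * (π / sin (π * s))) := by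
  have hP : 0 < P := by linarith [pow_pos hr 2]
  have hmeas : Measurable fun w ↦ ENNReal.ofReal
      (r ^ (2 * s) * w ^ (s - 1) / (2 * sqrtDisc r P p w * rayRoot r P p w)) := by
    unfold rayRoot sqrtDisc
    fun_prop
  calc
    _ = ∫⁻ w in Ioi 0, ENNReal.ofReal (r ^ (2 * s)) *
          ENNReal.ofReal (w ^ (s - 1) / (P + r ^ 2 * w) ^ (s + (1 - s))) := by
      rw [setLIntegral_rayIntegrand hr.le hP h, setLIntegral_rayIntegrand hr.le hP h',
        ← lintegral_add_left hmeas]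
      refine setLIntegral_congr_fun measurableSet_Ioi fun w (hw : 0 < w) ↦ ?_
      have hS := sqrtDisc_pos (r := r) (p := p) hP hw.le
      have hρ := rayRoot_pos (r := r) (p := p) hP hw.le
      have hS' := sqrtDisc_pos (r := r) (p := -p) hP hw.le
      have hρ' := rayRoot_pos (r := r) (p := -p) hP hw.le
      rw [← ENNReal.ofReal_add (by positivity) (by positivity),
        ← ENNReal.ofReal_mul (by positivity), add_sub_cancel, rpow_one]
      congr 1
      linear_combination r ^ (2 * s) * w ^ (s - 1) *
        inv_rayRoot_add_inv_rayRoot_neg (r := r) (p := p) hP hw.le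
    _ = ENNReal.ofReal (P ^ (s - 1) * (π / sin (π * s))) := by
      rw [lintegral_const_mul' _ _ ENNReal.ofReal_ne_top, lintegral_rpow_div_add_mul_rpow hs.1
        (sub_pos.2 hs.2) hP (by positivity), beta_one_sub, ← ENNReal.ofReal_mul (by positivity),
        rpow_mul hr.le, rpow_two, ← neg_sub 1 s, rpow_neg hP.le]
      congr 1
      field_simp

end Ray

open scoped RealInnerProductSpace

lemma one_sub_norm_add_smul_sq {E : Type*} [NormedAddCommGroup E] [InnerProductSpace ℝ E]
    (x : E) {ω : E} (hω : ‖ω‖ = 1) (ρ : ℝ) :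
    1 - ‖x + ρ • ω‖ ^ 2 = rayGap (1 - ‖x‖ ^ 2) ⟪x, ω⟫ ρ := by
  rw [norm_add_sq_real, norm_smul, hω, inner_smul_right, mul_one, norm_eq_abs, sq_abs, rayGap]
  ring

lemma sq_add_two_mul_inner_mul_lt {E : Type*} [NormedAddCommGroup E] [InnerProductSpace ℝ E]
    {x ω : E} {r : ℝ} (hω : ‖ω‖ = 1) (hr : 0 ≤ r) (hr1 : r < 1 - ‖x‖) :
    r ^ 2 + 2 * ⟪x, ω⟫ * r < 1 - ‖x‖ ^ 2 := by
  have hinner : ⟪x, ω⟫ ≤ ‖x‖ := by simpa [hω] using real_inner_le_norm x ω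
  calc r ^ 2 + 2 * ⟪x, ω⟫ * r ≤ r ^ 2 + 2 * ‖x‖ * r := by gcongr
    _ < 1 - ‖x‖ ^ 2 := by nlinarith [norm_nonneg x]

section Kernel

variable {n : ℕ} {s r : ℝ}

lemma sin_pi_mul_pos (hs : s ∈ Ioo 0 1) : 0 < sin (π * s) :=
  sin_pos_of_pos_of_lt_pi (mul_pos pi_pos hs.1) (mul_lt_of_lt_one_right pi_pos hs.2)

lemma cns_nonneg (hs : s ∈ Icc 0 1) : 0 ≤ cns n s := by
  have hsin : 0 ≤ sin (π * s) :=
    sin_nonneg_of_nonneg_of_le_pi (mul_nonneg pi_pos.le hs.1)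
      (mul_le_of_le_one_right pi_pos.le hs.2)
  unfold cns
  positivity

lemma eta_nonneg (hs : s ∈ Icc 0 1) (hr : 0 ≤ r) (z : EuclideanSpace ℝ (Fin n)) :
    0 ≤ eta n s r z := by
  unfold eta
  split_ifs with hz
  · have hd : 0 ≤ ‖z‖ ^ 2 - r ^ 2 := sub_nonneg.2 (pow_le_pow_left₀ hr hz.le 2)
    have := cns_nonneg (n := n) hs
    positivity
  · exact le_rfl

lemma eta_sub_eq_zero_of_mem_ball {x y : EuclideanSpace ℝ (Fin n)} (hy : y ∈ Metric.ball x r) :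
    eta n s r (y - x) = 0 :=
  if_neg (mem_ball_iff_norm.1 hy).not_gt

lemma uOneMinusS_nonneg (hs : s ∈ Icc 0 1) (z : EuclideanSpace ℝ (Fin n)) :
    0 ≤ uOneMinusS n s z := by
  unfold uOneMinusS
  split_ifs with hz
  · have hd : 0 ≤ 1 - ‖z‖ ^ 2 := sub_nonneg.2 (pow_le_one₀ (norm_nonneg z) hz.le)
    have := cns_nonneg (n := n) hs
    positivity
  · exact le_rfl

@[fun_prop]
lemma measurable_eta : Measurable (eta n s r) := by
  unfold eta
  exact Measurable.ite (measurableSet_lt measurable_const measurable_norm) (by fun_prop)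
    measurable_const

@[fun_prop]
lemma measurable_uOneMinusS : Measurable (uOneMinusS n s) := by
  unfold uOneMinusS
  exact Measurable.ite (measurableSet_lt measurable_norm measurable_const) (by fun_prop)
    measurable_const

lemma cns_mul_sphere_area (hn : n ≠ 0) (hs : s ∈ Ioo 0 1) :
    cns n s * (π / sin (π * s)) * (2 * π ^ (n / 2 : ℝ) / Gamma (n / 2)) = 2 := by
  have hsin := sin_pi_mul_pos hs
  rw [cns, rpow_add pi_pos, rpow_one]
  field_simp

variable (x : EuclideanSpace ℝ (Fin n)) {ω : EuclideanSpace ℝ (Fin n)}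

lemma pow_mul_eta_mul_uOneMinusS (hω : ‖ω‖ = 1) {ρ : ℝ} (hρ : 0 < ρ) :
    ρ ^ (n - 1) * (eta n s r (ρ • ω) * uOneMinusS n s (x + ρ • ω)) =
      (rayDomain r (1 - ‖x‖ ^ 2) ⟪x, ω⟫).indicator
        (fun ρ ↦ cns n s ^ 2 * rayIntegrand s r (1 - ‖x‖ ^ 2) ⟪x, ω⟫ ρ) ρ := by
  have hn : n ≠ 0 := by
    rintro rfl
    simp [Subsingleton.elim ω 0] at hω
  have hnorm : ‖ρ • ω‖ = ρ := by rw [norm_smul, hω, mul_one, norm_of_nonneg hρ.le]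
  have hball : ‖x + ρ • ω‖ < 1 ↔ 0 < rayGap (1 - ‖x‖ ^ 2) ⟪x, ω⟫ ρ := by
    rw [← one_sub_norm_add_smul_sq x hω, sub_pos, sq_lt_one_iff₀ (norm_nonneg _)]
  simp only [indicator_apply, rayDomain, mem_ofPred_eq, eta, uOneMinusS, hnorm, hball,
    one_sub_norm_add_smul_sq x hω, rayIntegrand, ← pow_sub_one_mul hn ρ, ite_and]
  split_ifs
  · field_simp
  all_goals simp

lemma lintegral_ray_eta_mul_uOneMinusS (hω : ‖ω‖ = 1) (hr : 0 ≤ r) :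
    ∫⁻ ρ in Ioi (0 : ℝ), ENNReal.ofReal (ρ ^ (n - 1)) *
        ENNReal.ofReal (eta n s r (ρ • ω) * uOneMinusS n s (x + ρ • ω)) =
      ENNReal.ofReal (cns n s ^ 2) * ∫⁻ ρ in rayDomain r (1 - ‖x‖ ^ 2) ⟪x, ω⟫,
        ENNReal.ofReal (rayIntegrand s r (1 - ‖x‖ ^ 2) ⟪x, ω⟫ ρ) := by
  have hsub : rayDomain r (1 - ‖x‖ ^ 2) ⟪x, ω⟫ ⊆ Ioi 0 := fun ρ hρ ↦ pos_of_mem_rayDomain hr hρ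
  rw [← lintegral_const_mul' _ _ ENNReal.ofReal_ne_top, ← inter_eq_left.2 hsub,
    ← setLIntegral_indicator measurableSet_rayDomain]
  refine setLIntegral_congr_fun measurableSet_Ioi fun ρ (hρ : 0 < ρ) ↦ ?_
  simp only [← ENNReal.ofReal_mul (pow_nonneg hρ.le _), ← ENNReal.ofReal_mul (sq_nonneg (cns n s)),
    pow_mul_eta_mul_uOneMinusS x hω hρ]
  exact (indicator_comp_of_zero (g := ENNReal.ofReal) ENNReal.ofReal_zero).symm ▸ rfl

lemma lintegral_eta_mul_uOneMinusS_add (hn : n ≠ 0) (hs : s ∈ Ioo 0 1) {x}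
    (hr : 0 < r) (hr1 : r < 1 - ‖x‖) :
    ∫⁻ z, ENNReal.ofReal (eta n s r z * uOneMinusS n s (x + z)) =
      ENNReal.ofReal (uOneMinusS n s x) := by
  have : NeZero n := ⟨hn⟩
  have hx : ‖x‖ < 1 := by linarith
  have hP : 0 < 1 - ‖x‖ ^ 2 := sub_pos.2 (pow_lt_one₀ (norm_nonneg x) hx two_ne_zero)
  have hu := uOneMinusS_nonneg (Ioo_subset_Icc_self hs) x
  have hsin := sin_pi_mul_pos hs
  have hrays (ω : EuclideanSpace ℝ (Fin n)) (hω : ‖ω‖ = 1) :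
      (∫⁻ ρ in Ioi (0 : ℝ), ENNReal.ofReal (ρ ^ (n - 1)) *
          ENNReal.ofReal (eta n s r (ρ • ω) * uOneMinusS n s (x + ρ • ω))) +
        ∫⁻ ρ in Ioi (0 : ℝ), ENNReal.ofReal (ρ ^ (n - 1)) *
          ENNReal.ofReal (eta n s r (ρ • -ω) * uOneMinusS n s (x + ρ • -ω)) =
      ENNReal.ofReal (cns n s ^ 2 * ((1 - ‖x‖ ^ 2) ^ (s - 1) * (π / sin (π * s)))) := by
    have hω' : ‖-ω‖ = 1 := by rwa [norm_neg]
    have hlt := sq_add_two_mul_inner_mul_lt hω' hr.le hr1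
    rw [lintegral_ray_eta_mul_uOneMinusS x hω hr.le, lintegral_ray_eta_mul_uOneMinusS x hω' hr.le,
      ← mul_add, inner_neg_right, setLIntegral_rayIntegrand_add_neg hs hr
        (sq_add_two_mul_inner_mul_lt hω hr.le hr1) (inner_neg_right (𝕜 := ℝ) x ω ▸ hlt),
      ← ENNReal.ofReal_mul (sq_nonneg _)]
  have htwice : 2 * ∫⁻ z, ENNReal.ofReal (eta n s r z * uOneMinusS n s (x + z)) =
      2 * ENNReal.ofReal (uOneMinusS n s x) := by
    rw [two_mul_lintegral_of_forall_ray_add_opposite_ray volume (by fun_prop)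
      (by simpa only [finrank_euclideanSpace_fin] using hrays), toSphere_univ,
      finrank_euclideanSpace_fin, ← ENNReal.ofReal_mul (by positivity),
      two_mul (ENNReal.ofReal _), ← ENNReal.ofReal_add hu hu, ← two_mul, uOneMinusS, if_pos hx]
    congr 1
    linear_combination cns n s * (1 - ‖x‖ ^ 2) ^ (s - 1) * cns_mul_sphere_area hn hs
  exact (ENNReal.mul_right_inj two_ne_zero ENNReal.ofNat_ne_top).1 htwice

lemma lintegral_eta_mul_uOneMinusS (hn : n ≠ 0) (hs : s ∈ Ioo 0 1) {x}
    (hr : 0 < r) (hr1 : r < 1 - ‖x‖) :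
    ∫⁻ y, ENNReal.ofReal (eta n s r (y - x) * uOneMinusS n s y) =
      ENNReal.ofReal (uOneMinusS n s x) := by
  rw [← lintegral_eta_mul_uOneMinusS_add hn hs hr hr1, ← lintegral_add_left_eq_self _ x]
  simp only [add_sub_cancel_left]

end Kernel

/-- `u_{1-s}` satisfies the `s`-mean value property on the open unit ball. -/
theorem uOneMinusS_meanValueProperty (n : ℕ) (hn : 1 ≤ n) (s : ℝ)
    (hs : s ∈ Set.Ioo (0 : ℝ) 1)
    (x : EuclideanSpace ℝ (Fin n)) (hx : ‖x‖ < 1)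
    (r : ℝ) (hr : 0 < r) (hr1 : r < 1 - ‖x‖) :
    MeasureTheory.IntegrableOn (fun y => eta n s r (y - x) * uOneMinusS n s y)
      (Metric.ball x r)ᶜ ∧
    uOneMinusS n s x = ∫ y in (Metric.ball x r)ᶜ, eta n s r (y - x) * uOneMinusS n s y := by
  have hs' := Ioo_subset_Icc_self hs
  have hnonneg : 0 ≤ᵐ[volume] fun y ↦ eta n s r (y - x) * uOneMinusS n s y :=
    .of_forall fun y ↦ mul_nonneg (eta_nonneg hs' hr.le _) (uOneMinusS_nonneg hs' y)
  have hmeas : Measurable fun y ↦ eta n s r (y - x) * uOneMinusS n s y := by fun_prop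
  have hlint := lintegral_eta_mul_uOneMinusS (Nat.one_le_iff_ne_zero.1 hn) hs hr hr1
  have hint : Integrable fun y ↦ eta n s r (y - x) * uOneMinusS n s y := by
    refine ⟨hmeas.aestronglyMeasurable, ?_⟩
    rw [hasFiniteIntegral_iff_ofReal hnonneg, hlint]
    exact ENNReal.ofReal_lt_top
  refine ⟨hint.integrableOn, ?_⟩
  rw [setIntegral_eq_integral_of_forall_compl_eq_zero fun y hy ↦ by
      rw [eta_sub_eq_zero_of_mem_ball (notMem_compl_iff.1 hy), zero_mul],
    integral_eq_lintegral_of_nonneg_ae hnonneg hmeas.aestronglyMeasurable, hlint,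
    ENNReal.toReal_ofReal (uOneMinusS_nonneg hs' x)]
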